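/- arXiv:1509.04970 — 2 statements merged into one kernel-verified Lean document; each statement's English description precedes it below -/
import Mathlib

section
/- Let p be a prime, n = p^m, K = 𝒞_n, and let J = diag(J_1, …, J_p) be a block-diagonal matrix with blocks J_i ∈ D_{n/p}(±1) for i = 1, …, p. Then J ∈ J_K^+ if and only if J_1·J_2·…·J_p = I. -/
open Matrix BigOperators
open scoped Classical

noncomputable section

abbrev Mat (n : ℕ) := Matrix (Fin n) (Fin n) ℂ

/-- A set of matrices is irreducible if the only invariant subspaces are `⊥` and `⊤`. -/
def IrreducibleSet {n : ℕ} (S : Set (Mat n)) : Prop :=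
  ∀ W : Submodule ℂ (Fin n → ℂ),
    (∀ A ∈ S, ∀ v ∈ W, A.mulVec v ∈ W) → W = ⊥ ∨ W = ⊤

/-- All complex eigenvalues are real. -/
def RealSpectrum {n : ℕ} (M : Mat n) : Prop :=
  ∀ z ∈ spectrum ℂ M, z.im = 0

/-- A set of matrices forming a group of invertible matrices under multiplication. -/
def IsMatGroup {n : ℕ} (G : Set (Mat n)) : Prop :=
  (1 : Mat n) ∈ G ∧ (∀ A ∈ G, ∀ B ∈ G, A * B ∈ G) ∧
    ∀ A ∈ G, IsUnit A ∧ A⁻¹ ∈ G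

/-- Monomial matrix: exactly one nonzero entry in each row and each column. -/
def IsMonomialMat {n : ℕ} (M : Mat n) : Prop :=
  (∀ i, ∃! j, M i j ≠ 0) ∧ ∀ j, ∃! i, M i j ≠ 0

/-- Pattern of a matrix: nonzero entries replaced by 1. -/
def patMat {n : ℕ} (M : Mat n) : Mat n :=
  Matrix.of fun i j => if M i j = 0 then 0 else 1

/-- Signed permutation matrix. -/
def IsSignedPermMat {n : ℕ} (M : Mat n) : Prop :=
  IsMonomialMat M ∧ ∀ i j, M i j = 0 ∨ M i j = 1 ∨ M i j = -1

/-- Permutation matrix associated to `σ` (sending `e j` to `e (σ j)`). -/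
def permMat {n : ℕ} (σ : Equiv.Perm (Fin n)) : Mat n :=
  Matrix.of fun i j => if i = σ j then 1 else 0

def IsPermMat {n : ℕ} (M : Mat n) : Prop := ∃ σ : Equiv.Perm (Fin n), M = permMat σ

/-- The cyclic permutation matrix `C_n`, sending `e i` to `e (i+1 mod n)`. -/
def cycMat (n : ℕ) : Mat n :=
  Matrix.of fun i j => if (i : ℕ) = ((j : ℕ) + 1) % n then 1 else 0

/-- The cyclic group `𝒞_n` generated by `C_n`. -/
def cycSet (n : ℕ) : Set (Mat n) := {M | ∃ k : ℕ, M = cycMat n ^ k}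

/-- Signed diagonal matrix: member of `D_n(±1)`. -/
def IsSignedDiag {n : ℕ} (M : Mat n) : Prop :=
  ∃ d : Fin n → ℂ, (∀ i, d i = 1 ∨ d i = -1) ∧ M = Matrix.diagonal d

/-- `avg_G(D) = D · D^G · … · D^(G^(m-1))` where `m = orderOf G` and `D^G = G⁻¹ D G`. -/
def avgMat {n : ℕ} (G D : Mat n) : Mat n :=
  ((List.range (orderOf G)).map fun k => (G ^ k)⁻¹ * D * G ^ k).prod

/-- `J_K = {J ∈ D_n(±1) : avg_G(J) = det(J)·I for all G ∈ K \ {I}}`. -/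
def Jset {n : ℕ} (K : Set (Mat n)) : Set (Mat n) :=
  {J | IsSignedDiag J ∧ ∀ G ∈ K, G ≠ 1 → avgMat G J = J.det • (1 : Mat n)}

/-- `J_K^+ = {J ∈ J_K : det J = 1}`. -/
def JsetPlus {n : ℕ} (K : Set (Mat n)) : Set (Mat n) :=
  {J | J ∈ Jset K ∧ J.det = 1}

/-- Realizable: simultaneously similar to a set of real-entried matrices. -/
def Realizable {n : ℕ} (S : Set (Mat n)) : Prop :=
  ∃ T : Mat n, IsUnit T ∧ ∀ A ∈ S, ∀ i j, ((T⁻¹ * A * T) i j).im = 0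

/-- Indecomposable: no common invariant standard subspace except `0` and `ℂ^n`. -/
def IndecomposableSet {n : ℕ} (S : Set (Mat n)) : Prop :=
  ∀ I : Set (Fin n),
    (∀ A ∈ S, ∀ j ∈ I, ∀ i, A i j ≠ 0 → i ∈ I) → I = ∅ ∨ I = Set.univ

/-- Kronecker product, identified with a matrix over `Fin (m*n)` canonically
(first factor's index is the block index). -/
def kron {m n : ℕ} (A : Mat m) (B : Mat n) : Mat (m * n) :=
  Matrix.reindex finProdFinEquiv finProdFinEquiv (Matrix.kroneckerMap (· * ·) A B)

end

/-- The block diagonal matrix `diag(J_1, …, J_p)`, where `J_i` is the diagonal matrix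
with diagonal `d i : Fin s → ℂ`, written as a matrix over `Fin n` (`n = p·s`,
block `i` occupying the rows `i·s, …, i·s + s - 1`). -/
noncomputable def blockDiagOfFun {p s n : ℕ} (h : p * s = n) (d : Fin p → Fin s → ℂ) :
    Mat n :=
  Matrix.diagonal fun t =>
    d (finProdFinEquiv.symm (finCongr h.symm t)).1
      (finProdFinEquiv.symm (finCongr h.symm t)).2

theorem cycMat_pow_apply {n : ℕ} (k : ℕ) (i j : Fin n) :
    (cycMat n ^ k) i j = if (i : ℕ) = ((j : ℕ) + k) % n then 1 else 0 := by
  induction k generalizing i j with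
  | zero =>
    simp [Matrix.one_apply, Nat.mod_eq_of_lt j.2, Fin.ext_iff]
  | succ k ih =>
    have hn : 0 < n := Nat.lt_of_le_of_lt (Nat.zero_le _) j.2
    rw [pow_succ, Matrix.mul_apply,
      Finset.sum_eq_single (⟨((j : ℕ) + 1) % n, Nat.mod_lt _ hn⟩ : Fin n)]
    · rw [ih]
      simp only [cycMat, Matrix.of_apply]
      simp only [if_true, mul_one, Nat.mod_add_mod]
      rw [show (j : ℕ) + 1 + k = j + (k + 1) by ring]
    · intro b _ hb
      have : (b : ℕ) ≠ ((j : ℕ) + 1) % n := fun h => hb (Fin.ext h)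
      simp [cycMat, this]
    · simp

theorem cycMat_pow_eq_one_iff {n : ℕ} (hn : 0 < n) (k : ℕ) :
    cycMat n ^ k = 1 ↔ n ∣ k := by
  constructor
  · intro h
    have h0 := congrFun (congrFun h ⟨0, hn⟩) ⟨0, hn⟩
    rw [cycMat_pow_apply] at h0
    simp only [Matrix.one_apply_eq, zero_add] at h0
    by_contra hk
    have : ¬ (0 = k % n) := fun h' => hk (Nat.dvd_of_mod_eq_zero h'.symm)
    simp [this] at h0
  · rintro ⟨c, rfl⟩
    ext i j
    rw [cycMat_pow_apply]
    simp [Matrix.one_apply, Nat.mod_eq_of_lt j.2, Fin.ext_iff]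

theorem cyc_conj {n : ℕ} (hn : 0 < n) (k : ℕ) (F : ℕ → ℂ) (hF : ∀ t, F (t % n) = F t) :
    (cycMat n ^ k)⁻¹ * Matrix.diagonal (fun t : Fin n => F t) * cycMat n ^ k
      = Matrix.diagonal (fun t : Fin n => F (t + k)) := by
  have hu : IsUnit (cycMat n ^ k) := by
    apply IsUnit.pow
    exact IsUnit.of_pow_eq_one ((cycMat_pow_eq_one_iff hn n).2 dvd_rfl) hn.ne'
  have hdet := (Matrix.isUnit_iff_isUnit_det _).1 hu
  have key : Matrix.diagonal (fun t : Fin n => F t) * cycMat n ^ k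
      = cycMat n ^ k * Matrix.diagonal (fun t : Fin n => F (t + k)) := by
    ext i j
    rw [Matrix.diagonal_mul, Matrix.mul_diagonal, cycMat_pow_apply]
    split_ifs with hij
    · rw [hij, hF, mul_one, one_mul]
    · simp
  rw [mul_assoc, key, ← mul_assoc, Matrix.nonsing_inv_mul _ hdet, one_mul]

theorem cyc_avg {n : ℕ} (hn : 0 < n) (k : ℕ) (F : ℕ → ℂ) (hF : ∀ t, F (t % n) = F t) :
    avgMat (cycMat n ^ k) (Matrix.diagonal (fun t : Fin n => F t))
      = Matrix.diagonal (fun t : Fin n =>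
          ∏ l ∈ Finset.range (orderOf (cycMat n ^ k)), F (t + k * l)) := by
  unfold avgMat
  generalize orderOf (cycMat n ^ k) = r
  induction r with
  | zero => simp
  | succ r ih =>
    rw [List.prod_range_succ, ih, ← pow_mul, cyc_conj hn _ F hF, Matrix.diagonal_mul_diagonal]
    simp only [Finset.prod_range_succ]

theorem prod_affine {p : ℕ} (hp : p.Prime) (H : ℕ → ℂ) (hH : ∀ t, H (t % p) = H t)
    (u q : ℕ) (hu : ¬ p ∣ u) :
    ∏ b ∈ Finset.range p, H (q + u * b) = ∏ b ∈ Finset.range p, H b := by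
  have hinj : Set.InjOn (fun b => (q + u * b) % p) (Finset.range p : Set ℕ) := by
    intro a ha b hb hab
    have h1 : q + u * a ≡ q + u * b [MOD p] := hab
    have h2 := Nat.ModEq.add_left_cancel' q h1
    have h3 : a ≡ b [MOD p] :=
      Nat.ModEq.cancel_left_of_coprime ((Nat.Prime.coprime_iff_not_dvd hp).2 hu) h2
    simp only [Finset.coe_range, Set.mem_Iio] at ha hb
    exact h3.eq_of_lt_of_lt ha hb
  have himg : (Finset.range p).image (fun b => (q + u * b) % p) = Finset.range p := by
    apply Finset.eq_of_subset_of_card_le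
    · intro x hx
      obtain ⟨b, _, rfl⟩ := Finset.mem_image.1 hx
      exact Finset.mem_range.2 (Nat.mod_lt _ hp.pos)
    · rw [Finset.card_image_of_injOn hinj]
  conv_rhs => rw [← himg, Finset.prod_image hinj]
  exact Finset.prod_congr rfl fun b _ => (hH _).symm

theorem prod_range_mul_aux (a b : ℕ) (f : ℕ → ℂ) :
    ∏ l ∈ Finset.range (a * b), f l
      = ∏ i ∈ Finset.range a, ∏ j ∈ Finset.range b, f (i + a * j) := by
  induction b with
  | zero => simp
  | succ b ih =>
    rw [Nat.mul_succ, Finset.prod_range_add, ih]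
    simp only [Finset.prod_range_succ, Finset.prod_mul_distrib]
    congr 1
    exact Finset.prod_congr rfl fun i _ => by rw [add_comm]

/-- The core statement for a periodic function. -/
theorem core {p m n s : ℕ} (hp : p.Prime) (hn : n = p ^ m) (hs : 0 < s) (h : p * s = n)
    (F : ℕ → ℂ) (hF : ∀ t, F (t % n) = F t) (hF1 : ∀ t, F t = 1 ∨ F t = -1) :
    Matrix.diagonal (fun t : Fin n => F t) ∈ JsetPlus (cycSet n)
      ↔ ∀ x < s, ∏ b ∈ Finset.range p, F (x + s * b) = 1 := by
  have hn0 : 0 < n := h ▸ Nat.mul_pos hp.pos hs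
  constructor
  · rintro ⟨⟨_, hG⟩, hdet⟩ x hx
    have hsn : s < n := by
      have := hp.two_le
      nlinarith
    have hne : cycMat n ^ s ≠ 1 := fun h1 =>
      absurd (Nat.le_of_dvd hs ((cycMat_pow_eq_one_iff hn0 s).1 h1)) (by omega)
    have hG' := hG _ ⟨s, rfl⟩ hne
    haveI := Fact.mk hp
    have hord : orderOf (cycMat n ^ s) = p := by
      apply orderOf_eq_prime _ hne
      rw [← pow_mul, cycMat_pow_eq_one_iff hn0, mul_comm, h]
    rw [cyc_avg hn0 s F hF, hord, hdet, one_smul] at hG'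
    have := congrFun (congrFun hG' ⟨x, hx.trans hsn⟩) ⟨x, hx.trans hsn⟩
    simpa using this
  · intro hx
    have hline : ∀ y u : ℕ, ¬ p ∣ u → ∏ b ∈ Finset.range p, F (y + s * u * b) = 1 := by
      intro y u hu
      rw [← hx (y % s) (Nat.mod_lt _ hs)]
      rw [← prod_affine hp (fun c => F (y % s + s * c)) ?_ u (y / s) hu]
      · refine Finset.prod_congr rfl fun b _ => ?_
        congr 1
        conv_lhs => rw [← Nat.mod_add_div y s]
        ring
      · intro t
        show F (y % s + s * (t % p)) = F (y % s + s * t)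
        rw [← hF (y % s + s * (t % p)), ← hF (y % s + s * t)]
        congr 1
        apply Nat.ModEq.add_left
        have : s * (t % p) ≡ s * t [MOD s * p] := Nat.ModEq.mul_left' s (Nat.mod_modEq t p)
        rwa [mul_comm s p, h] at this
    have hdet : (Matrix.diagonal (fun t : Fin n => F t)).det = 1 := by
      rw [Matrix.det_diagonal, Fin.prod_univ_eq_prod_range F n, ← h, mul_comm p s,
        prod_range_mul_aux]
      exact Finset.prod_eq_one fun x hx' => hx x (Finset.mem_range.1 hx')
    refine ⟨⟨⟨_, fun i => hF1 i, rfl⟩, ?_⟩, hdet⟩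
    rintro G ⟨k, rfl⟩ hG
    rw [cyc_avg hn0 k F hF, hdet, one_smul, ← Matrix.diagonal_one]
    congr 1
    funext t
    have hrn : orderOf (cycMat n ^ k) ∣ p ^ m := by
      rw [← hn]
      apply orderOf_dvd_of_pow_eq_one
      rw [← pow_mul, cycMat_pow_eq_one_iff hn0]
      exact dvd_mul_left _ _
    have hr1 : orderOf (cycMat n ^ k) ≠ 1 := fun h1 => hG (orderOf_eq_one_iff.1 h1)
    have hpr : p ∣ orderOf (cycMat n ^ k) := by
      obtain ⟨j, _, hj⟩ := (Nat.dvd_prime_pow hp).1 hrn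
      rw [hj] at hr1 ⊢
      refine dvd_pow_self p ?_
      rintro rfl
      simp at hr1
    obtain ⟨r', hr'⟩ := hpr
    have hr0 : 0 < r' := by
      rcases Nat.eq_zero_or_pos r' with h0 | h0
      · rw [hr', h0, mul_zero] at hrn
        have := Nat.eq_zero_of_zero_dvd hrn
        omega
      · exact h0
    have hnk : n ∣ k * (p * r') := by
      rw [← cycMat_pow_eq_one_iff hn0, pow_mul, ← hr']
      exact pow_orderOf_eq_one _
    obtain ⟨u, hu⟩ : s ∣ k * r' := by
      rw [← h, show k * (p * r') = p * (k * r') by ring] at hnk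
      exact Nat.dvd_of_mul_dvd_mul_left hp.pos hnk
    have hpu : ¬ p ∣ u := by
      rintro ⟨v, rfl⟩
      have h1 : (cycMat n ^ k) ^ r' = 1 := by
        rw [← pow_mul, cycMat_pow_eq_one_iff hn0, hu, ← h]
        exact ⟨v, by ring⟩
      have h2 := Nat.le_of_dvd hr0 (orderOf_dvd_of_pow_eq_one h1)
      rw [hr'] at h2
      have := hp.two_le
      nlinarith
    rw [hr', mul_comm p r', prod_range_mul_aux]
    refine Finset.prod_eq_one fun a _ => ?_
    rw [← hline (t + k * a) u hpu]
    refine Finset.prod_congr rfl fun b _ => ?_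
    rw [← hu]
    congr 1
    ring

/-- For `n = p^m` (`p` prime) and `K = 𝒞_n`, a matrix
`J = diag(J_1, …, J_p)` with `J_i ∈ D_{n/p}(±1)` lies in `J_K^+` iff
`J_1 ⋯ J_p = I`. -/
theorem stmt8 {p m n : ℕ} (hp : p.Prime) (hm : 1 ≤ m) (hn : n = p ^ m)
    (h : p * p ^ (m - 1) = n)
    (d : Fin p → Fin (p ^ (m - 1)) → ℂ)
    (hd : ∀ i x, d i x = 1 ∨ d i x = -1) :
    blockDiagOfFun h d ∈ JsetPlus (cycSet n) ↔ ∀ x, ∏ i, d i x = 1 := by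
  have hs : 0 < p ^ (m - 1) := pow_pos hp.pos _
  generalize p ^ (m - 1) = s at *
  have hn0 : 0 < n := h ▸ Nat.mul_pos hp.pos hs
  let F : ℕ → ℂ := fun t =>
    d ⟨(t / s) % p, Nat.mod_lt _ hp.pos⟩ ⟨t % s, Nat.mod_lt _ hs⟩
  have hF : ∀ t, F (t % n) = F t := by
    intro t
    have h1 : (t % n) / s % p = t / s % p := by
      rw [← h, mul_comm p s, Nat.mod_mul_right_div_self, Nat.mod_mod]
    have h2 : (t % n) % s = t % s := Nat.mod_mod_of_dvd _ ⟨p, by rw [← h, mul_comm]⟩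
    simp only [F, h1, h2]
  have hJ : blockDiagOfFun h d = Matrix.diagonal (fun t : Fin n => F t) := by
    unfold blockDiagOfFun
    congr 1
    funext t
    have h1 : (t : ℕ) / s < p := by
      rw [Nat.div_lt_iff_lt_mul hs, h]
      exact t.2
    simp only [F, Nat.mod_eq_of_lt h1]
    rfl
  rw [hJ, core hp hn hs h F hF (fun t => hd _ _)]
  have hval : ∀ x : Fin s, ∏ b ∈ Finset.range p, F (x + s * b) = ∏ i, d i x := by
    intro x
    rw [← Fin.prod_univ_eq_prod_range (fun b => F (x + s * b)) p]
    refine Finset.prod_congr rfl fun i _ => ?_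
    have h1 : ((x : ℕ) + s * i) / s % p = i := by
      rw [Nat.add_mul_div_left _ _ hs, Nat.div_eq_of_lt x.2, zero_add, Nat.mod_eq_of_lt i.2]
    have h2 : ((x : ℕ) + s * i) % s = x := by
      rw [Nat.add_mul_mod_self_left, Nat.mod_eq_of_lt x.2]
    simp only [F, h1, h2]
  constructor
  · intro hx x
    rw [← hval]
    exact hx x x.2
  · intro hx x hxs
    rw [← hx ⟨x, hxs⟩, ← hval ⟨x, hxs⟩]
end

section
/- Let n > 1 be odd and let K ⊆ M_n(ℂ) be an indecomposable abelian permutation matrix group. If K is not cyclic, then J_K = {I, −I}. -/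
open Matrix BigOperators
open scoped Classical

lemma aux_range {p : ℕ} [NeZero p] (u : ℕ → ℂ) :
    ∏ k : ZMod p, u k.val = ∏ k ∈ Finset.range p, u k := by
  refine Finset.prod_bij (fun k _ => k.val) ?_ ?_ ?_ ?_
  · intro k _; exact Finset.mem_range.2 (ZMod.val_lt k)
  · intro a _ b _ h; exact ZMod.val_injective p h
  · intro b hb
    exact ⟨(b : ZMod p), Finset.mem_univ _, ZMod.val_cast_of_lt (Finset.mem_range.1 hb)⟩
  · intros; rfl

lemma aux_sq {z : ℂ} (h : z = 1 ∨ z = -1) {m : ℕ} (hm : Odd m) : z ^ m = z := by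
  rcases h with rfl | rfl
  · simp
  · exact hm.neg_one_pow

lemma aux_ev {z : ℂ} (h : z = 1 ∨ z = -1) {m : ℕ} (hm : Even m) : z ^ m = 1 := by
  rcases h with rfl | rfl
  · simp
  · exact hm.neg_one_pow

lemma aux_core {α : Type*} (x y : Equiv.Perm α) (hc : Commute x y) {p : ℕ} (hp : p.Prime)
    (hodd : Odd p) (hx : x ^ p = 1) (d : α → ℂ) (hd : ∀ i, d i = 1 ∨ d i = -1)
    (D : ℂ) (hD : D = 1 ∨ D = -1)
    (h1 : ∀ i, ∏ k ∈ Finset.range p, d ((x ^ k) i) = D)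
    (h2 : ∀ m : ℕ, ∀ i, ∏ k ∈ Finset.range p, d (((x ^ m * y) ^ k) i) = D) (i : α) :
    d i = D := by
  haveI : Fact p.Prime := ⟨hp⟩
  have key : ∀ k j : ZMod p, ((x ^ k.val * y) ^ j.val) = x ^ (k * j).val * y ^ j.val := by
    intro k j
    rw [(hc.pow_left k.val).mul_pow, ← pow_mul, ZMod.val_mul, ← pow_mod_orderOf x (k.val * j.val),
      ← pow_mod_orderOf x (k.val * j.val % p), Nat.mod_mod_of_dvd _ (orderOf_dvd_of_pow_eq_one hx)]
  have A : ∏ k : ZMod p, ∏ j : ZMod p, d ((x ^ (k * j).val * y ^ j.val) i) = D := by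
    have : ∀ k : ZMod p, ∏ j : ZMod p, d ((x ^ (k * j).val * y ^ j.val) i) = D := by
      intro k
      rw [← h2 k.val i, ← aux_range]
      exact Finset.prod_congr rfl fun j _ => by rw [key]
    simp only [this, Finset.prod_const, Finset.card_univ, ZMod.card]
    exact aux_sq hD hodd
  rw [Finset.prod_comm, ← Finset.mul_prod_erase _ _ (Finset.mem_univ (0 : ZMod p))] at A
  have B : ∀ j ∈ (Finset.univ : Finset (ZMod p)).erase 0,
      ∏ k : ZMod p, d ((x ^ (k * j).val * y ^ j.val) i) = D := by
    intro j hj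
    have hj0 : j ≠ 0 := (Finset.mem_erase.1 hj).1
    rw [← h1 ((y ^ j.val) i), ← aux_range]
    exact Fintype.prod_equiv (Equiv.mulRight₀ j hj0) _ _ (fun k => by simp)
  rw [Finset.prod_congr rfl B, Finset.prod_const, Finset.card_erase_of_mem (Finset.mem_univ _),
    Finset.card_univ, ZMod.card, aux_ev hD (Nat.Odd.sub_odd hodd odd_one)] at A
  simp only [mul_zero, ZMod.val_zero, pow_zero, mul_one, Equiv.Perm.one_apply, Finset.prod_const,
    Finset.card_univ, ZMod.card] at A
  rwa [aux_sq (hd i) hodd] at A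

lemma aux_tors {G : Type*} [CommGroup G] [Finite G]
    (h : ∀ p : ℕ, p.Prime → Nat.card (powMonoidHom p : G →* G).ker ≤ p) (m : ℕ) (hm : m ≠ 0) :
    Nat.card (powMonoidHom m : G →* G).ker ≤ m := by
  induction m using Nat.recOnMul with
  | zero => exact absurd rfl hm
  | one =>
    have : (powMonoidHom 1 : G →* G).ker = ⊥ := by ext; simp [MonoidHom.mem_ker]
    rw [this]; simp
  | prime p hp => exact h p hp
  | mul a b ha hb =>
    have ha' := ha (by rintro rfl; simp at hm)
    have hb' := hb (by rintro rfl; simp at hm)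
    have e : (powMonoidHom (a * b) : G →* G).ker
        = ((powMonoidHom b : G →* G).ker).comap (powMonoidHom a) := by
      ext g; simp [MonoidHom.mem_ker, pow_mul]
    set f : (powMonoidHom (a * b) : G →* G).ker →* G :=
      (powMonoidHom a : G →* G).comp (Subgroup.subtype _) with hf
    have c := Subgroup.card_eq_card_quotient_mul_card_subgroup f.ker
    have c1 : Nat.card (_ ⧸ f.ker) ≤ b := by
      rw [Nat.card_congr (QuotientGroup.quotientKerEquivRange f).toEquiv]
      refine le_trans (Subgroup.card_le_of_le ?_) hb'
      rintro _ ⟨⟨g, hg⟩, rfl⟩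
      rw [e] at hg
      exact hg
    have c2 : Nat.card f.ker ≤ a := by
      refine le_trans ?_ ha'
      refine Nat.card_le_card_of_injective
        (fun g : f.ker => (⟨g.1.1, g.2⟩ : (powMonoidHom a : G →* G).ker)) ?_
      intro u v huv
      have : u.1.1 = v.1.1 := congrArg (fun w : (powMonoidHom a : G →* G).ker => w.1) huv
      exact Subtype.ext (Subtype.ext this)
    rw [c, mul_comm]
    exact Nat.mul_le_mul c2 c1

lemma aux_noncyc {G : Type*} [CommGroup G] [Finite G] (h : ¬ IsCyclic G) :
    ∃ p : ℕ, p.Prime ∧ ∃ x y : G, x ^ p = 1 ∧ y ^ p = 1 ∧ x ≠ 1 ∧ y ∉ Subgroup.zpowers x := by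
  by_contra hcon
  apply h
  have H : ∀ p : ℕ, p.Prime → Nat.card (powMonoidHom p : G →* G).ker ≤ p := by
    intro p hp
    by_contra hlt
    push Not at hlt
    have hnt : (powMonoidHom p : G →* G).ker ≠ ⊥ := by
      intro hb
      rw [hb] at hlt
      have := hp.two_le
      simp at hlt
      omega
    obtain ⟨x, hx, hx1⟩ := (Subgroup.bot_or_exists_ne_one _).resolve_left hnt
    refine hcon ⟨p, hp, x, ?_⟩
    by_contra hy
    push Not at hy
    have hle : (powMonoidHom p : G →* G).ker ≤ Subgroup.zpowers x :=
      fun y hyk => hy y hx hyk hx1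
    have := Subgroup.card_le_of_le hle
    rw [Nat.card_zpowers, orderOf_eq_prime (p := p) (hp := ⟨hp⟩) hx hx1] at this
    omega
  haveI := Fintype.ofFinite G
  refine isCyclic_of_card_pow_eq_one_le fun m hm => ?_
  have := aux_tors H m (by omega)
  refine le_trans (le_of_eq ?_) this
  rw [← Nat.card_eq_finsetCard]
  exact Nat.card_congr (Equiv.subtypeEquivRight fun g => by simp [MonoidHom.mem_ker])

lemma permMat_apply' {n : ℕ} (σ : Equiv.Perm (Fin n)) (i j : Fin n) :
    permMat σ i j = if i = σ j then 1 else 0 := rfl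

noncomputable def permHom (n : ℕ) : Equiv.Perm (Fin n) →* Mat n where
  toFun := permMat
  map_one' := by ext i j; simp only [permMat_apply', Matrix.one_apply, Equiv.Perm.one_apply]; congr
  map_mul' σ τ := by
    ext i j
    simp [permMat_apply', Matrix.mul_apply]
    congr

lemma permHom_inj (n : ℕ) : Function.Injective (permHom n) := by
  intro σ τ h
  ext j
  have := congrFun (congrFun h (σ j)) j
  change permMat σ (σ j) j = permMat τ (σ j) j at this
  rw [permMat_apply', permMat_apply'] at this
  by_contra hne
  rw [if_pos rfl, if_neg (fun h => hne (congrArg Fin.val h))] at this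
  exact one_ne_zero this

lemma aux_conj {n : ℕ} (σ : Equiv.Perm (Fin n)) (d : Fin n → ℂ) :
    (permHom n σ)⁻¹ * Matrix.diagonal d * permHom n σ = Matrix.diagonal (fun i => d (σ i)) := by
  have hu : permHom n σ⁻¹ * permHom n σ = 1 := by rw [← map_mul]; simp
  rw [Matrix.inv_eq_left_inv hu]
  have : Matrix.diagonal d * permHom n σ
      = permHom n σ * Matrix.diagonal (fun i => d (σ i)) := by
    ext i j
    rw [Matrix.diagonal_mul, Matrix.mul_diagonal]
    change d i * permMat σ i j = permMat σ i j * d (σ j)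
    rw [permMat_apply']
    split_ifs with h
    · rw [h]; ring
    · simp
  rw [mul_assoc, this, ← mul_assoc, hu, one_mul]

lemma aux_avg {n : ℕ} (σ : Equiv.Perm (Fin n)) (d : Fin n → ℂ) :
    avgMat (permHom n σ) (Matrix.diagonal d)
      = Matrix.diagonal (fun i => ∏ k ∈ Finset.range (orderOf σ), d ((σ ^ k) i)) := by
  unfold avgMat
  rw [orderOf_injective _ (permHom_inj n)]
  simp only [← map_pow, aux_conj]
  generalize orderOf σ = m
  induction m with
  | zero => simp
  | succ m ih =>
    rw [List.range_succ, List.map_append, List.prod_append, ih]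
    simp [Matrix.diagonal_mul_diagonal, Finset.prod_range_succ]

/-- If an indecomposable abelian permutation group `K ⊆ M_n(ℂ)`
(`n > 1` odd) is not cyclic, then `J_K = {I, -I}`. -/
theorem stmt12 {n : ℕ} (hodd : Odd n) (hn : 1 < n) (K : Set (Mat n))
    (hgrp : IsMatGroup K) (hperm : ∀ M ∈ K, IsPermMat M)
    (hab : ∀ A ∈ K, ∀ B ∈ K, A * B = B * A)
    (hind : IndecomposableSet K)
    (hnotcyc : ¬ ∃ A ∈ K, ∀ B ∈ K, ∃ t : ℕ, B = A ^ t) :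
    Jset K = {(1 : Mat n), -(1 : Mat n)} := by
  obtain ⟨hone, hmul, hinv⟩ := hgrp
  have hperm' : ∀ M ∈ K, ∃ σ, permHom n σ = M := fun M hM => by
    obtain ⟨σ, h⟩ := hperm M hM
    exact ⟨σ, h.symm⟩
  let H : Subgroup (Equiv.Perm (Fin n)) :=
    { carrier := {σ | permHom n σ ∈ K}
      one_mem' := by simpa using hone
      mul_mem' := fun {a b} ha hb => by
        simp only [Set.mem_ofPred_eq] at *
        rw [map_mul]; exact hmul _ ha _ hb
      inv_mem' := fun {a} ha => by
        simp only [Set.mem_ofPred_eq] at *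
        have : permHom n a⁻¹ = (permHom n a)⁻¹ :=
          (Matrix.inv_eq_left_inv (by rw [← map_mul]; simp)).symm
        rw [this]; exact (hinv _ ha).2 }
  have hHmem : ∀ σ, σ ∈ H ↔ permHom n σ ∈ K := fun σ => Iff.rfl
  have hcomm : ∀ σ ∈ H, ∀ τ ∈ H, σ * τ = τ * σ := by
    intro σ hσ τ hτ
    apply permHom_inj n
    rw [map_mul, map_mul]
    exact hab _ hσ _ hτ
  let i0 : Fin n := ⟨0, by omega⟩
  have htrans : ∀ j, ∃ σ ∈ H, σ i0 = j := by
    have := hind {j | ∃ σ ∈ H, σ i0 = j} (by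
      rintro A hA j ⟨σ, hσ, rfl⟩ i hi
      obtain ⟨τ, rfl⟩ := hperm' A hA
      change permMat τ i (σ i0) ≠ 0 at hi
      rw [permMat_apply'] at hi
      refine ⟨τ * σ, H.mul_mem hA hσ, ?_⟩
      by_contra hne
      exact hi (if_neg fun h => hne h.symm))
    rcases this with h | h
    · have : i0 ∈ (∅ : Set (Fin n)) := h ▸ ⟨1, H.one_mem, rfl⟩
      exact absurd this (Set.notMem_empty _)
    · intro j
      have : j ∈ {j | ∃ σ ∈ H, σ i0 = j} := h ▸ Set.mem_univ j
      exact this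
  have hcard : Nat.card H = n := by
    have : Function.Bijective (fun σ : H => σ.1 i0) := by
      constructor
      · rintro ⟨σ, hσ⟩ ⟨τ, hτ⟩ h
        apply Subtype.ext
        refine Equiv.ext fun j => ?_
        obtain ⟨ρ, hρ, rfl⟩ := htrans j
        change σ i0 = τ i0 at h
        change (σ * ρ) i0 = (τ * ρ) i0
        rw [hcomm _ hσ _ hρ, hcomm _ hτ _ hρ, Equiv.Perm.mul_apply, Equiv.Perm.mul_apply, h]
      · intro j
        obtain ⟨σ, hσ, h⟩ := htrans j
        exact ⟨⟨σ, hσ⟩, h⟩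
    rw [Nat.card_congr (Equiv.ofBijective _ this)]
    simp
  have hordodd : ∀ σ ∈ H, Odd (orderOf σ) := by
    intro σ hσ
    have := orderOf_dvd_natCard (⟨σ, hσ⟩ : H)
    rw [hcard, Subgroup.orderOf_mk] at this
    exact hodd.of_dvd_nat this
  have hconst : ∀ z : ℂ, (z = 1 ∨ z = -1) → Matrix.diagonal (fun _ => z) ∈ Jset K := by
    intro z hz
    refine ⟨⟨_, fun _ => hz, rfl⟩, ?_⟩
    intro G hG _
    obtain ⟨σ, rfl⟩ := hperm' G hG
    rw [aux_avg, Matrix.det_diagonal]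
    simp only [Finset.prod_const, Finset.card_range, Finset.card_univ, Fintype.card_fin]
    rw [aux_sq hz (hordodd σ hG), aux_sq hz hodd, Matrix.smul_one_eq_diagonal]
  apply Set.eq_of_subset_of_subset
  · rintro J ⟨⟨d, hd, rfl⟩, hJ⟩
    letI : CommGroup H :=
      { (inferInstance : Group H) with
        mul_comm := fun a b => Subtype.ext (hcomm _ a.2 _ b.2) }
    have hnc : ¬ IsCyclic H := by
      rintro ⟨⟨σ, hσ⟩, hg⟩
      refine hnotcyc ⟨permHom n σ, hσ, fun B hB => ?_⟩
      obtain ⟨τ, rfl⟩ := hperm' B hB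
      have h1 : (⟨τ, hB⟩ : H) ∈ Subgroup.zpowers ⟨σ, hσ⟩ := hg ⟨τ, hB⟩
      rw [← mem_powers_iff_mem_zpowers] at h1
      obtain ⟨t, ht⟩ := h1
      refine ⟨t, ?_⟩
      rw [← map_pow]
      exact congrArg _ (congrArg Subtype.val ht).symm
    obtain ⟨p, hp, ⟨x, hx⟩, ⟨y, hy⟩, hxp, hyp, hx1, hyx⟩ := aux_noncyc hnc
    have hxp' : x ^ p = 1 := congrArg Subtype.val hxp
    have hyp' : y ^ p = 1 := congrArg Subtype.val hyp
    have hx1' : x ≠ 1 := fun h => hx1 (Subtype.ext h)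
    have hordx : orderOf x = p := orderOf_eq_prime (hp := ⟨hp⟩) hxp' hx1'
    have hpodd : Odd p := hordx ▸ hordodd x hx
    have hD : (∏ i, d i) = 1 ∨ (∏ i, d i) = -1 := by
      refine Finset.prod_induction _ (fun z => z = 1 ∨ z = -1) ?_ (Or.inl rfl) (fun i _ => hd i)
      rintro a b (rfl | rfl) (rfl | rfl) <;> simp
    have hmain : ∀ σ ∈ H, σ ≠ 1 → σ ^ p = 1 → ∀ i,
        ∏ k ∈ Finset.range p, d ((σ ^ k) i) = ∏ i, d i := by
      intro σ hσ hσ1 hσp i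
      have h := hJ (permHom n σ) hσ (fun h => hσ1 (permHom_inj n (by rw [h, map_one])))
      rw [aux_avg, Matrix.det_diagonal, Matrix.smul_one_eq_diagonal,
        orderOf_eq_prime (hp := ⟨hp⟩) hσp hσ1] at h
      exact congrFun (Matrix.diagonal_injective h) i
    have hfin : ∀ i, d i = ∏ i, d i := by
      have hc : Commute x y := hcomm x hx y hy
      refine aux_core x y hc hp hpodd hxp' d hd _ hD (hmain x hx hx1' hxp') ?_
      intro m
      refine hmain _ (H.mul_mem (H.pow_mem hx m) hy) ?_ ?_
      · intro h
        apply hyx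
        have : (⟨y, hy⟩ : H) = (⟨x, hx⟩ ^ m)⁻¹ := by
          apply Subtype.ext
          exact eq_inv_of_mul_eq_one_right h
        rw [this]
        exact Subgroup.inv_mem _ (Subgroup.npow_mem_zpowers _ _)
      · rw [(hc.pow_left m).mul_pow, hyp', ← pow_mul, mul_comm, pow_mul, hxp']; simp
    have hdd : d = fun _ => ∏ i, d i := funext hfin
    rcases hD with h | h
    · left; rw [hdd, h]; exact Matrix.diagonal_one
    · right; rw [hdd, h]
      rw [Set.mem_singleton_iff, ← Matrix.diagonal_one, Matrix.diagonal_neg]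
  · rintro J (rfl | rfl)
    · have := hconst 1 (Or.inl rfl)
      rwa [Matrix.diagonal_one] at this
    · have := hconst (-1) (Or.inr rfl)
      have e : Matrix.diagonal (fun _ : Fin n => (-1 : ℂ)) = -1 := by
        rw [← Matrix.diagonal_one, Matrix.diagonal_neg]
      rwa [e] at this
end
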